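/- Let U ⊆ ℝ² be open, connected and simply connected, let h be a C¹ Lorentzian metric on U, and let s : U → ℝ² be a C¹ vector field. Define t : U → ℝ² by t^α := Σ_β ε^{αβ}(h s)_β, where ε^{01} = −1/√(−det h) = −ε^{10}, ε^{00} = ε^{11} = 0. Assume tᵀ h t > 0 on U and that t and s commute: Σ_β (t^β ∂_β s^α − s^β ∂_β t^α) = 0 on U. Then there exists a C² function χ : U → ℝ satisfying □_h χ = 0 and ∂χ² := Σ_{α,β} h^{αβ} ∂_αχ ∂_βχ > 0 on U, such that the lowered components of t satisfy (h t)_α = ∂_αχ / ∂χ² at every point of U. -/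

import Mathlib

open Matrix

/-- Partial derivative `∂_α f` of a real-valued function on `ℝ²`. -/
noncomputable def pd (α : Fin 2) (f : (Fin 2 → ℝ) → ℝ) (x : Fin 2 → ℝ) : ℝ :=
  fderiv ℝ f x (Pi.single α 1)

/-- `∂χ² = Σ_{α,β} h^{αβ} ∂_αχ ∂_βχ` (with `h^{αβ}` the inverse-metric entries). -/
noncomputable def gradSq (h : (Fin 2 → ℝ) → Matrix (Fin 2) (Fin 2) ℝ)
    (χ : (Fin 2 → ℝ) → ℝ) (x : Fin 2 → ℝ) : ℝ :=
  ∑ α, ∑ β, (h x)⁻¹ α β * pd α χ x * pd β χ x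

/-- Wave operator in divergence form: `□_h χ = Σ_α ∂_α(√(−det h) Σ_β h^{αβ} ∂_βχ)`. -/
noncomputable def waveOp (h : (Fin 2 → ℝ) → Matrix (Fin 2) (Fin 2) ℝ)
    (χ : (Fin 2 → ℝ) → ℝ) (x : Fin 2 → ℝ) : ℝ :=
  ∑ α, pd α (fun y => Real.sqrt (-(h y).det) * ∑ β, (h y)⁻¹ α β * pd β χ y) x

/-- The antisymmetric array `ε^{αβ}` with `ε^{01} = −1/√(−det h)`. -/
noncomputable def eps (m : Matrix (Fin 2) (Fin 2) ℝ) : Matrix (Fin 2) (Fin 2) ℝ :=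
  !![0, -1 / Real.sqrt (-m.det); 1 / Real.sqrt (-m.det), 0]

/-!
The covector field `ω` with `ω s = 0`, `ω t = 1` is closed, because `s` and `t` commute:
`dω(s, t) = s (ω t) - t (ω s) - ω [s, t] = 0`, and `s`, `t` span the plane. Simple connectedness
gives `χ` with `dχ = ω`. Since `t` is the Hodge dual of `s`, the one-form `h t` annihilates `s`,
so `h t = (tᵀ h t) ω`; raising indices, `h⁻¹ dχ = t / (tᵀ h t)` and `∂χ² = 1 / (tᵀ h t)`.
Finally `√(-det h) h⁻¹ dχ` is `t` divided by the area spanned by `t` and `s`, and its divergence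
is, up to sign, the exterior derivative of the other member of the dual coframe, which is closed
for the same reason.
-/

open Filter Topology VectorField

section Cocycle

variable {ι X G : Type*} [TopologicalSpace X]

theorem exists_locallyConstant_section_of_discrete_fiber [SimplyConnectedSpace X]
    [LocallyPathConnectedSpace X] [TopologicalSpace G] [DiscreteTopology G] [Nonempty G]
    (Z : FiberBundleCore ι X G) :
    ∃ c : ι → X → G, (∀ i, ∀ x ∈ Z.baseSet i, ∀ᶠ y in 𝓝 x, c i y = c i x) ∧
      ∀ i j, ∀ x ∈ Z.baseSet i ∩ Z.baseSet j, Z.coordChange i j x (c i x) = c j x := by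
  obtain ⟨x₀⟩ : Nonempty X := inferInstance
  obtain ⟨g₀⟩ : Nonempty G := inferInstance
  have hcov : IsCoveringMap Z.proj := FiberBundle.isCoveringMap (F := G) (E := Z.Fiber)
  obtain ⟨σ, ⟨-, hσ⟩, -⟩ :=
    hcov.existsUnique_continuousMap_lifts (ContinuousMap.id X) x₀ ⟨x₀, g₀⟩ rfl
  have proj_σ (x : X) : (σ x).1 = x := congrFun hσ x
  refine ⟨fun i x => (Z.localTriv i (σ x)).2, fun i x hx => ?_, fun i j x hx => ?_⟩
  · have hsource : σ x ∈ (Z.localTriv i).source := by rwa [Z.mem_localTriv_source, proj_σ]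
    have hcont : ContinuousAt (fun y => (Z.localTriv i (σ y)).2) x :=
      continuousAt_snd.comp (((Z.localTriv i).continuousAt hsource).comp σ.continuous.continuousAt)
    exact hcont.eventually_mem ((isOpen_discrete {(Z.localTriv i (σ x)).2}).mem_nhds rfl)
  · simp only [Z.localTriv_apply, proj_σ]
    exact Z.coordChange_comp _ i j x ⟨⟨Z.mem_baseSet_at x, hx.1⟩, hx.2⟩ _

variable [AddGroup G]

/-- The principal bundle with discrete structure group `G` glued from the pieces `V i × G` along
a locally constant Čech cocycle `g`. -/
noncomputable def cocycleBundleCore [TopologicalSpace G] [DiscreteTopology G] {V : ι → Set X}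
    (hV : ∀ i, IsOpen (V i)) (hcover : ∀ x, ∃ i, x ∈ V i) (g : ι → ι → X → G)
    (hconst : ∀ i j, ∀ x ∈ V i ∩ V j, ∀ᶠ y in 𝓝 x, g i j y = g i j x)
    (hcocycle : ∀ i j k, ∀ x ∈ V i ∩ V j ∩ V k, g i j x + g j k x = g i k x) :
    FiberBundleCore ι X G where
  baseSet := V
  isOpen_baseSet := hV
  indexAt x := (hcover x).choose
  mem_baseSet_at x := (hcover x).choose_spec
  coordChange i j x v := v + g i j x
  coordChange_self i x hx v := by simpa using hcocycle i i i x ⟨⟨hx, hx⟩, hx⟩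
  continuousOn_coordChange i j := by
    rintro ⟨x, v⟩ ⟨hx, -⟩
    have hg : ContinuousAt (g i j) x :=
      continuousAt_const.congr (EventuallyEq.symm (hconst i j x hx))
    exact (continuousAt_snd.add (hg.comp continuousAt_fst)).continuousWithinAt
  coordChange_comp i j k x hx v := by rw [add_assoc, hcocycle i j k x hx]

theorem exists_add_eq_of_locallyConstant_cocycle [SimplyConnectedSpace X]
    [LocallyPathConnectedSpace X] {V : ι → Set X}
    (hV : ∀ i, IsOpen (V i)) (hcover : ∀ x, ∃ i, x ∈ V i) (g : ι → ι → X → G)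
    (hconst : ∀ i j, ∀ x ∈ V i ∩ V j, ∀ᶠ y in 𝓝 x, g i j y = g i j x)
    (hcocycle : ∀ i j k, ∀ x ∈ V i ∩ V j ∩ V k, g i j x + g j k x = g i k x) :
    ∃ c : ι → X → G, (∀ i, ∀ x ∈ V i, ∀ᶠ y in 𝓝 x, c i y = c i x) ∧
      ∀ i j, ∀ x ∈ V i ∩ V j, c i x + g i j x = c j x := by
  let : TopologicalSpace G := ⊥
  have : DiscreteTopology G := ⟨rfl⟩
  exact exists_locallyConstant_section_of_discrete_fiber
    (cocycleBundleCore hV hcover g hconst hcocycle)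

end Cocycle

section Primitive

variable {E F : Type*} [NormedAddCommGroup E] [NormedSpace ℝ E]
  [NormedAddCommGroup F] [NormedSpace ℝ F] {ω : E → E →L[ℝ] F} {U : Set E}

theorem eventually_sub_eq_of_eventually_hasFDerivAt {f g : E → F} {x : E}
    (hf : ∀ᶠ y in 𝓝 x, HasFDerivAt f (ω y) y) (hg : ∀ᶠ y in 𝓝 x, HasFDerivAt g (ω y) y) :
    ∀ᶠ y in 𝓝 x, f y - g y = f x - g x := by
  obtain ⟨r, hr, hfg⟩ := Metric.eventually_nhds_iff_ball.1 (hf.and hg)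
  have hsub : ∀ y ∈ Metric.ball x r, HasFDerivAt (fun z => f z - g z) (0 : E →L[ℝ] F) y :=
    fun y hy => by simpa using (hfg y hy).1.fun_sub (hfg y hy).2
  filter_upwards [Metric.ball_mem_nhds x hr] with y hy
  exact Metric.isOpen_ball.is_const_of_fderiv_eq_zero (𝕜 := ℝ) (convex_ball x r).isPreconnected
    (fun z hz => (hsub z hz).differentiableAt.differentiableWithinAt)
    (fun z hz => (hsub z hz).fderiv) hy (Metric.mem_ball_self hr)

theorem exists_forall_hasFDerivAt_of_locally [SimplyConnectedSpace U] (hU : IsOpen U)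
    (hloc : ∀ x ∈ U, ∃ f : E → F, ∀ᶠ y in 𝓝 x, HasFDerivAt f (ω y) y) :
    ∃ χ : E → F, ∀ x ∈ U, HasFDerivAt χ (ω x) x := by
  -- The local primitives themselves index the cover; their differences form the cocycle.
  let V (f : E → F) : Set U := {x | ∀ᶠ y in 𝓝 x.1, HasFDerivAt f (ω y) y}
  have hV (f : E → F) : IsOpen (V f) :=
    isOpen_setOfPred_eventually_nhds.preimage continuous_subtype_val
  have hcover (x : U) : ∃ f, x ∈ V f := hloc x x.2
  have := hU.locallyPathConnectedSpace
  obtain ⟨c, hc_const, hc_add⟩ := exists_add_eq_of_locallyConstant_cocycle hV hcover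
    (fun f g x => f x - g x)
    (fun f g x hx => continuousAt_subtype_val.eventually
      (eventually_sub_eq_of_eventually_hasFDerivAt hx.1 hx.2))
    (fun f g k x _ => sub_add_sub_cancel (f x) (g x) (k x))
  choose prim hprim using hcover
  let χ : E → F := Function.extend Subtype.val (fun x : U => prim x x + c (prim x) x) 0
  have χ_eq (f : E → F) (x : U) (hx : x ∈ V f) : χ x = f x + c f x := by
    have hχ : χ x = prim x x + c (prim x) x := Subtype.val_injective.extend_apply _ _ x
    rw [hχ, ← hc_add f (prim x) x ⟨hx, hprim x⟩]
    abel
  refine ⟨χ, fun x hx => ?_⟩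
  let f := prim ⟨x, hx⟩
  have hf : ⟨x, hx⟩ ∈ V f := hprim ⟨x, hx⟩
  have hχ : ∀ᶠ y : U in 𝓝 ⟨x, hx⟩, χ y = f y + c f ⟨x, hx⟩ := by
    filter_upwards [hc_const f _ hf, (hV f).mem_nhds hf] with y hcy hy
    rw [χ_eq f y hy, hcy]
  have hχ_near : χ =ᶠ[𝓝 x] fun y => f y + c f ⟨x, hx⟩ := by
    rwa [EventuallyEq, ← map_nhds_subtype_coe_eq_nhds hx (hU.mem_nhds hx)]
  exact (hf.self_of_nhds.add_const _).congr_of_eventuallyEq hχ_near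

theorem exists_forall_hasFDerivAt_of_simplyConnectedSpace [CompleteSpace F]
    [SimplyConnectedSpace U] (hU : IsOpen U) (hω : DifferentiableOn ℝ ω U)
    (hclosed : ∀ x ∈ U, ∀ u v, fderiv ℝ ω x u v = fderiv ℝ ω x v u) :
    ∃ χ : E → F, ∀ x ∈ U, HasFDerivAt χ (ω x) x := by
  refine exists_forall_hasFDerivAt_of_locally hU fun x hx => ?_
  obtain ⟨r, hr, hball⟩ := Metric.isOpen_iff.1 hU x hx
  obtain ⟨f, hf⟩ := (convex_ball x r).exists_forall_hasFDerivAt_of_fderiv_symmetric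
    Metric.isOpen_ball (hω.mono hball) fun y hy => hclosed y (hball hy)
  exact ⟨f, eventually_of_mem (Metric.ball_mem_nhds x hr) hf⟩

end Primitive

section Calculus

variable {𝕜 E F : Type*} [NontriviallyNormedField 𝕜] [NormedAddCommGroup E] [NormedSpace 𝕜 E]
  [NormedAddCommGroup F] [NormedSpace 𝕜 F]

theorem fderiv_apply_comm_of_lieBracket_eq_zero {ω : E → E →L[𝕜] F} {V W : E → E} {x : E}
    (hω : DifferentiableAt 𝕜 ω x) (hV : DifferentiableAt 𝕜 V x) (hW : DifferentiableAt 𝕜 W x)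
    (hωV : fderiv 𝕜 (fun y => ω y (V y)) x = 0) (hωW : fderiv 𝕜 (fun y => ω y (W y)) x = 0)
    (hVW : lieBracket 𝕜 V W x = 0) :
    fderiv 𝕜 ω x (V x) (W x) = fderiv 𝕜 ω x (W x) (V x) := by
  have leibniz_V : ω x (fderiv 𝕜 V x (W x)) + fderiv 𝕜 ω x (W x) (V x) = 0 := by
    simpa [fderiv_clm_apply hω hV] using DFunLike.congr_fun hωV (W x)
  have leibniz_W : ω x (fderiv 𝕜 W x (V x)) + fderiv 𝕜 ω x (V x) (W x) = 0 := by
    simpa [fderiv_clm_apply hω hW] using DFunLike.congr_fun hωW (V x)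
  have hbracket : fderiv 𝕜 W x (V x) = fderiv 𝕜 V x (W x) := sub_eq_zero.1 hVW
  rw [hbracket] at leibniz_W
  exact add_left_cancel (leibniz_W.trans leibniz_V.symm)

theorem contDiffOn_succ_of_hasFDerivAt {f : E → F} {f' : E → E →L[𝕜] F} {U : Set E} {n : ℕ}
    (hU : IsOpen U) (hf : ∀ x ∈ U, HasFDerivAt f (f' x) x) (hf' : ContDiffOn 𝕜 n f' U) :
    ContDiffOn 𝕜 (n + 1) f U :=
  (contDiffOn_succ_iff_fderiv_of_isOpen hU).2
    ⟨fun x hx => (hf x hx).differentiableAt.differentiableWithinAt, by simp,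
      hf'.congr fun x hx => (hf x hx).fderiv⟩

theorem contDiffOn_mulVec {m n : Type*} [Fintype m] [Fintype n] {U : Set E} {k : WithTop ℕ∞}
    {A : E → Matrix m n 𝕜} {v : E → n → 𝕜} (hA : ∀ i j, ContDiffOn 𝕜 k (fun x => A x i j) U)
    (hv : ContDiffOn 𝕜 k v U) : ContDiffOn 𝕜 k (fun x => A x *ᵥ v x) U :=
  contDiffOn_pi.2 fun i => ContDiffOn.sum fun j _ => (hA i j).mul (contDiffOn_pi.1 hv j)

end Calculus

section Plane

variable {v w : (Fin 2 → ℝ) → Fin 2 → ℝ} {x : Fin 2 → ℝ} {U : Set (Fin 2 → ℝ)}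

/-- The standard area form `v⁰ w¹ - v¹ w⁰` of the plane, as a continuous bilinear map. -/
noncomputable def areaForm : (Fin 2 → ℝ) →L[ℝ] (Fin 2 → ℝ) →L[ℝ] ℝ :=
  let coord (i : Fin 2) : (Fin 2 → ℝ) →L[ℝ] ℝ := ContinuousLinearMap.proj i
  (coord 0).smulRight (coord 1) - (coord 1).smulRight (coord 0)

theorem areaForm_apply (a b : Fin 2 → ℝ) : areaForm a b = a 0 * b 1 - a 1 * b 0 := by
  simp [areaForm]

theorem areaForm_swap (a b : Fin 2 → ℝ) : areaForm a b = -areaForm b a := by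
  simp only [areaForm_apply]
  ring

theorem sub_swap_eq_areaForm_smul {F : Type*} [NormedAddCommGroup F] [NormedSpace ℝ F]
    (B : (Fin 2 → ℝ) →L[ℝ] (Fin 2 → ℝ) →L[ℝ] F) (a b : Fin 2 → ℝ) :
    B a b - B b a = areaForm a b •
      (B (Pi.single 0 1) (Pi.single 1 1) - B (Pi.single 1 1) (Pi.single 0 1)) := by
  have expand (u : Fin 2 → ℝ) : u = u 0 • Pi.single 0 1 + u 1 • Pi.single 1 1 := by
    simpa only [Fin.sum_univ_two] using pi_eq_sum_univ' u
  conv_lhs => rw [expand a, expand b]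
  simp only [areaForm_apply, map_add, map_smul, _root_.add_apply, _root_.smul_apply]
  module

/-- The covector dual to `b` in the frame `(a, b)`: it annihilates `a` and takes the value `1` on
`b`. It is the junk value `0` when `a` and `b` are linearly dependent. -/
noncomputable def dualCovector (a b : Fin 2 → ℝ) : (Fin 2 → ℝ) →L[ℝ] ℝ :=
  (areaForm a b)⁻¹ • areaForm a

theorem dualCovector_apply (a b u : Fin 2 → ℝ) :
    dualCovector a b u = areaForm a u / areaForm a b := by
  simp [dualCovector, div_eq_inv_mul]

theorem contDiffOn_dualCovector {n : WithTop ℕ∞} (hv : ContDiffOn ℝ n v U)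
    (hw : ContDiffOn ℝ n w U) (harea : ∀ x ∈ U, areaForm (v x) (w x) ≠ 0) :
    ContDiffOn ℝ n (fun y => dualCovector (v y) (w y)) U := by
  have hav : ContDiffOn ℝ n (fun y => areaForm (v y)) U := areaForm.contDiff.comp_contDiffOn hv
  exact ((hav.clm_apply hw).inv harea).smul hav

theorem differentiableAt_dualCovector (hv : DifferentiableAt ℝ v x) (hw : DifferentiableAt ℝ w x)
    (harea : areaForm (v x) (w x) ≠ 0) :
    DifferentiableAt ℝ (fun y => dualCovector (v y) (w y)) x := by
  have hav : DifferentiableAt ℝ (fun y => areaForm (v y)) x :=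
    areaForm.differentiableAt.comp x hv
  exact ((hav.clm_apply hw).inv harea).smul hav

theorem fderiv_dualCovector_comm (hv : DifferentiableAt ℝ v x) (hw : DifferentiableAt ℝ w x)
    (harea : areaForm (v x) (w x) ≠ 0) (hvw : lieBracket ℝ v w x = 0) (a b : Fin 2 → ℝ) :
    fderiv ℝ (fun y => dualCovector (v y) (w y)) x a b =
      fderiv ℝ (fun y => dualCovector (v y) (w y)) x b a := by
  have harea_near : ∀ᶠ y in 𝓝 x, areaForm (v y) (w y) ≠ 0 :=
    ((areaForm.differentiableAt.comp x hv).clm_apply hw).continuousAt.eventually_ne harea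
  have hv_zero : (fun y => dualCovector (v y) (w y) (v y)) = fun _ => 0 := by
    ext y
    simp [dualCovector_apply, areaForm_apply, mul_comm]
  have hw_one : (fun y => dualCovector (v y) (w y) (w y)) =ᶠ[𝓝 x] fun _ => 1 := by
    filter_upwards [harea_near] with y hy
    rw [dualCovector_apply, div_self hy]
  have hcomm := fderiv_apply_comm_of_lieBracket_eq_zero
    (differentiableAt_dualCovector hv hw harea) hv hw (by simp [hv_zero])
    (by simp [hw_one.fderiv_eq]) hvw
  have hframe := sub_swap_eq_areaForm_smul
    (fderiv ℝ (fun y => dualCovector (v y) (w y)) x) (v x) (w x)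
  rw [sub_eq_zero.2 hcomm, eq_comm, smul_eq_zero_iff_right harea] at hframe
  rw [← sub_eq_zero, sub_swap_eq_areaForm_smul, hframe, smul_zero]

theorem exists_hasFDerivAt_dualCovector [SimplyConnectedSpace U] (hU : IsOpen U) {n : ℕ}
    (hn : n ≠ 0) (hv : ContDiffOn ℝ n v U) (hw : ContDiffOn ℝ n w U)
    (harea : ∀ x ∈ U, areaForm (v x) (w x) ≠ 0) (hvw : ∀ x ∈ U, lieBracket ℝ v w x = 0) :
    ∃ χ : (Fin 2 → ℝ) → ℝ, ContDiffOn ℝ (n + 1) χ U ∧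
      ∀ x ∈ U, HasFDerivAt χ (dualCovector (v x) (w x)) x := by
  have hn' : (n : WithTop ℕ∞) ≠ 0 := mod_cast hn
  have hω := contDiffOn_dualCovector hv hw harea
  obtain ⟨χ, hχ⟩ := exists_forall_hasFDerivAt_of_simplyConnectedSpace hU
    (hω.differentiableOn hn') fun x hx => fderiv_dualCovector_comm
      ((hv.differentiableOn hn').differentiableAt (hU.mem_nhds hx))
      ((hw.differentiableOn hn').differentiableAt (hU.mem_nhds hx)) (harea x hx) (hvw x hx)
  exact ⟨χ, contDiffOn_succ_of_hasFDerivAt hU hχ hω, hχ⟩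

theorem sum_pd_div_areaForm_eq_zero (hv : DifferentiableAt ℝ v x) (hw : DifferentiableAt ℝ w x)
    (harea : areaForm (v x) (w x) ≠ 0) (hvw : lieBracket ℝ v w x = 0) :
    ∑ α, pd α (fun y => v y α / areaForm (v y) (w y)) x = 0 := by
  have hω := differentiableAt_dualCovector hv hw harea
  have hpd (α : Fin 2) (b : Fin 2 → ℝ) : pd α (fun y => dualCovector (v y) (w y) b) x =
      fderiv ℝ (fun y => dualCovector (v y) (w y)) x (Pi.single α 1) b := by
    simp [pd, fderiv_clm_apply hω (differentiableAt_const b)]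
  have hcomp_zero : (fun y => v y 0 / areaForm (v y) (w y)) =
      fun y => dualCovector (v y) (w y) (Pi.single 1 1) := by
    ext y
    simp [dualCovector_apply, areaForm_apply]
  have hcomp_one : (fun y => v y 1 / areaForm (v y) (w y)) =
      fun y => -dualCovector (v y) (w y) (Pi.single 0 1) := by
    ext y
    simp [dualCovector_apply, areaForm_apply, neg_div]
  have hpd_neg : pd 1 (fun y => -dualCovector (v y) (w y) (Pi.single 0 1)) x =
      -pd 1 (fun y => dualCovector (v y) (w y) (Pi.single 0 1)) x := by
    simp [pd, fderiv_fun_neg]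
  rw [Fin.sum_univ_two, hcomp_zero, hcomp_one, hpd_neg, hpd, hpd,
    fderiv_dualCovector_comm hv hw harea hvw, add_neg_cancel]

theorem fderiv_apply_eq_sum_pd (hv : DifferentiableAt ℝ v x) (u : Fin 2 → ℝ) (α : Fin 2) :
    fderiv ℝ v x u α = ∑ β, u β * pd β (fun y => v y α) x := by
  have hcomp : fderiv ℝ v x u α = fderiv ℝ (fun y => v y α) x u := by
    rw [fderiv_apply hv]
    rfl
  conv_lhs => rw [hcomp, pi_eq_sum_univ' u]
  simp [pd]

theorem lieBracket_apply_eq_sum_pd (hv : DifferentiableAt ℝ v x) (hw : DifferentiableAt ℝ w x)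
    (α : Fin 2) : lieBracket ℝ v w x α =
      ∑ β, (v x β * pd β (fun y => w y α) x - w x β * pd β (fun y => v y α) x) := by
  rw [Finset.sum_sub_distrib, ← fderiv_apply_eq_sum_pd hw, ← fderiv_apply_eq_sum_pd hv]
  rfl

end Plane

section Metric

theorem contDiffOn_eps {E : Type*} [NormedAddCommGroup E] [NormedSpace ℝ E] {U : Set E}
    {k : WithTop ℕ∞} {h : E → Matrix (Fin 2) (Fin 2) ℝ}
    (hh : ∀ α β, ContDiffOn ℝ k (fun x => h x α β) U) (hdet : ∀ x ∈ U, (h x).det < 0)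
    (α β : Fin 2) : ContDiffOn ℝ k (fun x => eps (h x) α β) U := by
  have hneg_det : ContDiffOn ℝ k (fun x => -(h x).det) U := by
    simp only [det_fin_two]
    exact (((hh 0 0).mul (hh 1 1)).sub ((hh 0 1).mul (hh 1 0))).neg
  have hsqrt : ContDiffOn ℝ k (fun x => √(-(h x).det)) U :=
    hneg_det.sqrt fun x hx => (neg_pos.2 (hdet x hx)).ne'
  have hdiv (a : ℝ) : ContDiffOn ℝ k (fun x => a / √(-(h x).det)) U :=
    contDiffOn_const.div hsqrt fun x hx => (Real.sqrt_pos.2 (neg_pos.2 (hdet x hx))).ne'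
  fin_cases α <;> fin_cases β
  exacts [contDiffOn_const, hdiv (-1), hdiv 1, contDiffOn_const]

theorem dotProduct_mulVec_eq_sqrt_mul_areaForm {m : Matrix (Fin 2) (Fin 2) ℝ} (hm : m.IsSymm)
    (hdet : m.det < 0) {s t : Fin 2 → ℝ} (ht : t = eps m *ᵥ m *ᵥ s) (u : Fin 2 → ℝ) :
    u ⬝ᵥ m *ᵥ t = √(-m.det) * areaForm u s := by
  have hsqrt_pos : 0 < √(-m.det) := Real.sqrt_pos.2 (neg_pos.2 hdet)
  have hm10 : m 1 0 = m 0 1 := hm.apply 0 1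
  have hsq : √(-m.det) ^ 2 = -(m 0 0 * m 1 1 - m 0 1 * m 0 1) := by
    rw [Real.sq_sqrt (neg_pos.2 hdet).le, det_fin_two, hm10]
  simp only [ht, eps, areaForm_apply, mulVec, dotProduct, Fin.sum_univ_two, of_apply, cons_val',
    cons_val_zero, cons_val_one, cons_val_fin_one, hm10]
  field_simp
  linear_combination (u 1 * s 0 - u 0 * s 1) * hsq

theorem areaForm_pos_of_dotProduct_mulVec_pos {m : Matrix (Fin 2) (Fin 2) ℝ} (hm : m.IsSymm)
    (hdet : m.det < 0) {s t : Fin 2 → ℝ} (ht : t = eps m *ᵥ m *ᵥ s)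
    (hpos : 0 < t ⬝ᵥ m *ᵥ t) : 0 < areaForm t s := by
  rw [dotProduct_mulVec_eq_sqrt_mul_areaForm hm hdet ht] at hpos
  exact pos_of_mul_pos_right hpos (Real.sqrt_nonneg _)

theorem dualCovector_apply_eq_dotProduct_mulVec_div {m : Matrix (Fin 2) (Fin 2) ℝ}
    (hm : m.IsSymm) (hdet : m.det < 0) {s t : Fin 2 → ℝ} (ht : t = eps m *ᵥ m *ᵥ s)
    (u : Fin 2 → ℝ) : dualCovector s t u = (u ⬝ᵥ m *ᵥ t) / (t ⬝ᵥ m *ᵥ t) := by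
  have hlower := dotProduct_mulVec_eq_sqrt_mul_areaForm hm hdet ht
  rw [dualCovector_apply, hlower, hlower, areaForm_swap s u, areaForm_swap s t, neg_div_neg_eq,
    mul_div_mul_left _ _ (Real.sqrt_pos.2 (neg_pos.2 hdet)).ne']

variable {h : (Fin 2 → ℝ) → Matrix (Fin 2) (Fin 2) ℝ} {χ : (Fin 2 → ℝ) → ℝ} {x : Fin 2 → ℝ}
  {τ : Fin 2 → ℝ}

theorem sum_inv_mul_pd_eq_div (hdet : (h x).det ≠ 0)
    (hχ : ∀ α, pd α χ x = (h x *ᵥ τ) α / (τ ⬝ᵥ h x *ᵥ τ)) (α : Fin 2) :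
    ∑ β, (h x)⁻¹ α β * pd β χ x = τ α / (τ ⬝ᵥ h x *ᵥ τ) := by
  have hraise : ((h x)⁻¹ *ᵥ h x *ᵥ τ) α = τ α := by
    rw [mulVec_mulVec, nonsing_inv_mul _ hdet.isUnit, one_mulVec]
  simp_rw [hχ, ← mul_div_assoc, ← Finset.sum_div]
  exact congrArg (· / _) hraise

theorem gradSq_eq_inv (hdet : (h x).det ≠ 0) (hτ : τ ⬝ᵥ h x *ᵥ τ ≠ 0)
    (hχ : ∀ α, pd α χ x = (h x *ᵥ τ) α / (τ ⬝ᵥ h x *ᵥ τ)) :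
    gradSq h χ x = (τ ⬝ᵥ h x *ᵥ τ)⁻¹ := by
  calc gradSq h χ x = ∑ α, pd α χ x * ∑ β, (h x)⁻¹ α β * pd β χ x := by
        simp only [gradSq, Finset.mul_sum, mul_left_comm, mul_assoc]
    _ = (∑ α, τ α * (h x *ᵥ τ) α) / (τ ⬝ᵥ h x *ᵥ τ) ^ 2 := by
        simp_rw [sum_inv_mul_pd_eq_div hdet hχ, Finset.sum_div]
        exact Finset.sum_congr rfl fun α _ => by rw [hχ]; ring
    _ = (τ ⬝ᵥ h x *ᵥ τ)⁻¹ := by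
        rw [← dotProduct, sq, div_mul_cancel_left₀ hτ]

theorem waveOp_eq_sum_pd_div_areaForm {s t : (Fin 2 → ℝ) → Fin 2 → ℝ}
    (hnear : ∀ᶠ y in 𝓝 x, (h y).IsSymm ∧ (h y).det < 0 ∧ t y = eps (h y) *ᵥ h y *ᵥ s y ∧
      ∀ α, pd α χ y = (h y *ᵥ t y) α / (t y ⬝ᵥ h y *ᵥ t y)) :
    waveOp h χ x = ∑ α, pd α (fun y => t y α / areaForm (t y) (s y)) x := by
  refine Finset.sum_congr rfl fun α _ => ?_
  suffices heq : (fun y => √(-(h y).det) * ∑ β, (h y)⁻¹ α β * pd β χ y) =ᶠ[𝓝 x]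
      fun y => t y α / areaForm (t y) (s y) by
    rw [pd, heq.fderiv_eq, pd]
  filter_upwards [hnear] with y ⟨hsymm, hdet, ht, hχ⟩
  rw [sum_inv_mul_pd_eq_div hdet.ne hχ, dotProduct_mulVec_eq_sqrt_mul_areaForm hsymm hdet ht,
    ← mul_div_assoc, mul_div_mul_left _ _ (Real.sqrt_pos.2 (neg_pos.2 hdet)).ne']

end Metric

theorem statement4 (U : Set (Fin 2 → ℝ)) (hU : IsOpen U)
    (hconn : IsConnected U) (hsc : SimplyConnectedSpace U)
    (h : (Fin 2 → ℝ) → Matrix (Fin 2) (Fin 2) ℝ)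
    (hsymm : ∀ x ∈ U, (h x).IsSymm) (hdet : ∀ x ∈ U, (h x).det < 0)
    (hC1 : ∀ α β : Fin 2, ContDiffOn ℝ 1 (fun x => h x α β) U)
    (s : (Fin 2 → ℝ) → Fin 2 → ℝ) (hs : ContDiffOn ℝ 1 s U)
    (t : (Fin 2 → ℝ) → Fin 2 → ℝ)
    (htdef : ∀ x α, t x α = ∑ β, eps (h x) α β * ((h x).mulVec (s x)) β)
    (htpos : ∀ x ∈ U, 0 < t x ⬝ᵥ (h x).mulVec (t x))
    (hcomm : ∀ x ∈ U, ∀ α : Fin 2,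
      ∑ β, (t x β * pd β (fun y => s y α) x - s x β * pd β (fun y => t y α) x) = 0) :
    ∃ χ : (Fin 2 → ℝ) → ℝ, ContDiffOn ℝ 2 χ U ∧
      (∀ x ∈ U, waveOp h χ x = 0) ∧
      (∀ x ∈ U, 0 < gradSq h χ x) ∧
      (∀ x ∈ U, ∀ α : Fin 2, ((h x).mulVec (t x)) α = pd α χ x / gradSq h χ x) := by
  have ht_eq (x) : t x = eps (h x) *ᵥ h x *ᵥ s x := funext (htdef x)
  have ht : ContDiffOn ℝ 1 t U := (contDiffOn_mulVec (contDiffOn_eps hC1 hdet)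
    (contDiffOn_mulVec hC1 hs)).congr fun x _ => ht_eq x
  have hs_diff x (hx : x ∈ U) := (hs.contDiffAt (hU.mem_nhds hx)).differentiableAt one_ne_zero
  have ht_diff x (hx : x ∈ U) := (ht.contDiffAt (hU.mem_nhds hx)).differentiableAt one_ne_zero
  have hts x (hx : x ∈ U) : lieBracket ℝ t s x = 0 := funext fun α =>
    (lieBracket_apply_eq_sum_pd (ht_diff x hx) (hs_diff x hx) α).trans (hcomm x hx α)
  have harea x (hx : x ∈ U) : areaForm (t x) (s x) ≠ 0 :=
    (areaForm_pos_of_dotProduct_mulVec_pos (hsymm x hx) (hdet x hx) (ht_eq x) (htpos x hx)).ne'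
  obtain ⟨χ, hχ_C2, hχ⟩ := exists_hasFDerivAt_dualCovector hU one_ne_zero hs ht
    (fun x hx => by simpa [areaForm_swap (s x)] using harea x hx)
    (fun x hx => by rw [lieBracket_swap, hts x hx, neg_zero])
  have hpd x (hx : x ∈ U) (α) : pd α χ x = (h x *ᵥ t x) α / (t x ⬝ᵥ h x *ᵥ t x) := by
    rw [pd, (hχ x hx).fderiv, dualCovector_apply_eq_dotProduct_mulVec_div (hsymm x hx) (hdet x hx)
      (ht_eq x), single_one_dotProduct]
  have hgrad x (hx : x ∈ U) : gradSq h χ x = (t x ⬝ᵥ h x *ᵥ t x)⁻¹ :=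
    gradSq_eq_inv (hdet x hx).ne (htpos x hx).ne' (hpd x hx)
  refine ⟨χ, hχ_C2, fun x hx => ?_, fun x hx => ?_, fun x hx α => ?_⟩
  · rw [waveOp_eq_sum_pd_div_areaForm (eventually_of_mem (hU.mem_nhds hx) fun y hy =>
      ⟨hsymm y hy, hdet y hy, ht_eq y, hpd y hy⟩)]
    exact sum_pd_div_areaForm_eq_zero (ht_diff x hx) (hs_diff x hx) (harea x hx) (hts x hx)
  · simpa [hgrad x hx] using htpos x hx
  · rw [hgrad x hx, hpd x hx, div_inv_eq_mul, div_mul_cancel₀ _ (htpos x hx).ne']
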